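/- If X has finite second moment and finite Fisher information I(X), then its characteristic function f(t) = E e^{itX} satisfies |f'(t)| ≤ (1 + √(β₂ I(X)))/|t| for all t ≠ 0, where β₂ = E X². -/

import Mathlib

open MeasureTheory Real

lemma aux_zero_of_const (p : ℝ → ℝ) (hint : Integrable p) (v c : ℝ)
    (h : ∀ y, v ≤ y → p y = c) : c = 0 := by
  have ht : Filter.Tendsto p Filter.atTop (nhds c) :=
    tendsto_const_nhds.congr' (by
      filter_upwards [Filter.eventually_ge_atTop v] with y hy using (h y hy).symm)
  exact (hint.integrableAtFilter Filter.atTop).eq_zero_of_tendsto (fun s hs => by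
    obtain ⟨b, hb⟩ := Filter.mem_atTop_sets.1 hs
    have : Set.Ici b ⊆ s := fun x hx => hb x hx
    exact top_le_iff.1 ((by simp : volume (Set.Ici b) = ⊤) ▸ measure_mono this)) ht

lemma aux_ii (p p' : ℝ → ℝ)
    (hint : Integrable p) (h1 : ∫ x, p x = 1)
    (hFTC : ∀ a b : ℝ, p b - p a = ∫ x in a..b, p' x) (a b : ℝ) :
    IntervalIntegrable p' volume a b := by
  wlog hab : a ≤ b
  · exact (this p p' hint h1 hFTC b a (by linarith)).symm
  by_contra hn
  -- non-integrability between u ≤ v forces p u = p v = 0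
  have key : ∀ u v, u ≤ v → ¬ IntervalIntegrable p' volume u v → p u = 0 ∧ p v = 0 := by
    intro u v huv hno
    have hc : ∀ a' b', a' ≤ u → v ≤ b' → p b' = p a' := by
      intro a' b' ha hb
      have : ¬ IntervalIntegrable p' volume a' b' := by
        intro hi
        apply hno
        apply hi.mono_set
        rw [Set.uIcc_of_le huv, Set.uIcc_of_le (by linarith)]
        exact Set.Icc_subset_Icc ha hb
      have h2 := hFTC a' b'
      rw [intervalIntegral.integral_undef this] at h2
      linarith
    have hu : p u = 0 := aux_zero_of_const p hint v (p u) (fun y hy => hc u y le_rfl hy)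
    exact ⟨hu, by rw [hc u v le_rfl le_rfl, hu]⟩
  have hz : ∀ x, p x = 0 := by
    intro x
    by_cases hx : IntervalIntegrable p' volume a x
    · have hx2 : ¬ IntervalIntegrable p' volume x b := fun h => hn (hx.trans h)
      rcases le_total x b with h | h
      · exact (key x b h hx2).1
      · exact (key b x h (fun h => hx2 h.symm)).2
    · rcases le_total a x with h | h
      · exact (key a x h hx).2
      · exact (key x a h (fun h => hx h.symm)).1
  simp [hz] at h1

lemma aux_int_zero (u u' : ℝ → ℝ) (hu : Integrable u) (hu' : Integrable u')
    (hF : ∀ a b : ℝ, u b - u a = ∫ x in a..b, u' x) : ∫ x, u' x = 0 := by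
  have ht := intervalIntegral_tendsto_integral hu' Filter.tendsto_neg_atTop_atBot
    (Filter.tendsto_id (α := ℝ) (x := Filter.atTop))
  simp only [← hF, id] at ht
  have hi : Integrable (fun R : ℝ => u R - u (-R)) := hu.sub hu.comp_neg
  exact (hi.integrableAtFilter Filter.atTop).eq_zero_of_tendsto (fun s hs => by
    obtain ⟨b, hb⟩ := Filter.mem_atTop_sets.1 hs
    have : Set.Ici b ⊆ s := fun x hx => hb x hx
    exact top_le_iff.1 ((by simp : volume (Set.Ici b) = ⊤) ▸ measure_mono this)) ht

lemma aux_ftc (p p' : ℝ → ℝ) (hii : ∀ a b, IntervalIntegrable p' volume a b)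
    (hFTC : ∀ a b : ℝ, p b - p a = ∫ x in a..b, p' x)
    (g g' : ℝ → ℝ) (hg : ContDiff ℝ 1 g) (hg' : ∀ x, HasDerivAt g (g' x) x) (a b : ℝ) :
    p b * g b - p a * g a = ∫ x in a..b, (p' x * g x + p x * g' x) := by
  have hp : p = fun x => p a + ∫ v in a..x, p' v := by
    funext x; rw [← hFTC]; ring
  have hac : AbsolutelyContinuousOnInterval p a b := by
    rw [hp]
    have hcst : AbsolutelyContinuousOnInterval (fun _ : ℝ => p a) a b :=
      (contDiff_const (n := 1)).contDiffOn.absolutelyContinuousOnInterval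
    exact hcst.add ((hii a b).absolutelyContinuousOnInterval_intervalIntegral (by simp))
  have hgac : AbsolutelyContinuousOnInterval g a b :=
    hg.contDiffOn.absolutelyContinuousOnInterval
  rw [← hac.integral_deriv_mul_eq_sub hgac]
  apply intervalIntegral.integral_congr_ae
  filter_upwards [(hii a b).ae_hasDerivAt_integral] with x hx hxm
  have h3 := (hx (Set.uIoc_subset_uIcc hxm) a (by simp)).const_add (p a)
  rw [← hp] at h3
  rw [h3.deriv, (hg' x).deriv]

lemma aux_cs (u v : ℝ → ℝ) (hum : AEStronglyMeasurable u) (hvm : AEStronglyMeasurable v)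
    (hu0 : ∀ x, 0 ≤ u x) (hv0 : ∀ x, 0 ≤ v x)
    (hu : Integrable (fun x => u x ^ 2)) (hv : Integrable (fun x => v x ^ 2)) :
    Integrable (fun x => u x * v x) ∧
    ∫ x, u x * v x ≤ √((∫ x, u x ^ 2) * ∫ x, v x ^ 2) := by
  have mu := (memLp_two_iff_integrable_sq hum).2 hu
  have mv := (memLp_two_iff_integrable_sq hvm).2 hv
  refine ⟨mu.integrable_mul mv, ?_⟩
  have := integral_mul_le_Lp_mul_Lq_of_nonneg (μ := volume) Real.HolderConjugate.two_two
    (f := u) (g := v) (.of_forall hu0) (.of_forall hv0) (by simpa using mu) (by simpa using mv)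
  simp only [Real.rpow_two, ← Real.sqrt_eq_rpow] at this
  rwa [Real.sqrt_mul (integral_nonneg fun x => sq_nonneg _)]

/-- If `X` has density `p` with finite second moment `β₂` and finite Fisher information
`I`, then the derivative of its characteristic function `f(t) = ∫ e^{itx} p(x) dx`
satisfies `|f'(t)| ≤ (1 + √(β₂ I)) / |t|` for all `t ≠ 0`. -/
theorem charFun_deriv_bound
    (p p' : ℝ → ℝ) (I β₂ : ℝ)
    (hnn : ∀ x, 0 ≤ p x) (hint : Integrable p) (h1 : ∫ x, p x = 1)
    (hFTC : ∀ a b : ℝ, p b - p a = ∫ x in a..b, p' x)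
    (hconv : ∀ x, p x = 0 → p' x = 0)
    (hIfin : IntegrableOn (fun x => (p' x) ^ 2 / p x) {x | 0 < p x})
    (hI : I = ∫ x in {x | 0 < p x}, (p' x) ^ 2 / p x)
    (hβint : Integrable (fun x => x ^ 2 * p x))
    (hβ : β₂ = ∫ x, x ^ 2 * p x)
    (f : ℝ → ℂ)
    (hf : ∀ t : ℝ, f t = ∫ x : ℝ, Complex.exp (Complex.I * t * x) * (p x : ℂ)) :
    ∀ t : ℝ, t ≠ 0 → ∀ d : ℂ, HasDerivAt f d t →
      ‖d‖ ≤ (1 + Real.sqrt (β₂ * I)) / |t| := by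
  intro t ht d hd
  have hii := aux_ii p p' hint h1 hFTC
  have hp'm : AEStronglyMeasurable p' :=
    (locallyIntegrable_iff.2 fun k hk => by
      obtain ⟨R, hR⟩ := hk.isBounded.subset_closedBall 0
      rw [Real.closedBall_eq_Icc] at hR
      rcases le_or_gt 0 R with h | h
      · exact (((intervalIntegrable_iff_integrableOn_Icc_of_le (by linarith)).1
          (hii (0 - R) (0 + R)))).mono_set hR
      · rw [Set.Icc_eq_empty (by linarith)] at hR
        rw [Set.subset_empty_iff.1 hR]; exact integrableOn_empty).aestronglyMeasurable
  have hpm := hint.aestronglyMeasurable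
  -- Fisher information over the whole line
  have hzero : ∀ x, x ∉ {x | 0 < p x} → p' x ^ 2 / p x = 0 := by
    intro x hx
    have : p x = 0 := le_antisymm (not_lt.1 hx) (hnn x)
    simp [this]
  have hG : Integrable (fun x => p' x ^ 2 / p x) :=
    hIfin.integrable_of_forall_notMem_eq_zero hzero
  have hI' : I = ∫ x, p' x ^ 2 / p x := by
    rw [hI, setIntegral_eq_integral_of_forall_compl_eq_zero hzero]
  have hu2 : ∀ x, (|x| * √(p x)) ^ 2 = x ^ 2 * p x := by
    intro x; rw [mul_pow, sq_abs, Real.sq_sqrt (hnn x)]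
  have hv2 : ∀ x, (|p' x| / √(p x)) ^ 2 = p' x ^ 2 / p x := by
    intro x; rw [div_pow, sq_abs, Real.sq_sqrt (hnn x)]
  have huv : ∀ x, (|x| * √(p x)) * (|p' x| / √(p x)) = |x * p' x| := by
    intro x
    rcases (hnn x).eq_or_lt with h | h
    · simp [hconv x h.symm]
    · have := Real.sqrt_pos.2 h
      rw [abs_mul]; field_simp
  have hsm : AEStronglyMeasurable (fun x => √(p x)) :=
    Real.continuous_sqrt.comp_aestronglyMeasurable hpm
  have hcs := aux_cs (fun x => |x| * √(p x)) (fun x => |p' x| / √(p x))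
    (continuous_abs.aestronglyMeasurable.mul hsm)
    ((continuous_abs.comp_aestronglyMeasurable hp'm).div₀ hsm)
    (fun x => by positivity) (fun x => by positivity)
    (by simpa only [hu2] using hβint) (by simpa only [hv2] using hG)
  simp only [hu2, hv2, huv, ← hβ, ← hI'] at hcs
  obtain ⟨hxp'a, hbound⟩ := hcs
  have hxp' : Integrable (fun x => x * p' x) :=
    (integrable_norm_iff (continuous_id.aestronglyMeasurable.mul hp'm)).1 hxp'a
  have hxp : Integrable (fun x => x * p x) := by
    refine (hint.add hβint).mono' (continuous_id.aestronglyMeasurable.mul hpm)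
      (.of_forall fun x => ?_)
    have h0 := hnn x
    simp only [Pi.add_apply, norm_mul, Real.norm_eq_abs]
    rw [abs_of_nonneg h0]
    have : |x| ≤ 1 + x ^ 2 := by nlinarith [sq_abs x, sq_nonneg (|x| - 1)]
    nlinarith
  -- the derivative as an integral
  have hpCm : AEStronglyMeasurable (fun x => (p x : ℂ)) :=
    Complex.continuous_ofReal.comp_aestronglyMeasurable hpm
  have hec : ∀ s : ℝ, Continuous (fun x : ℝ => Complex.exp (Complex.I * s * x)) := by
    intro s; fun_prop
  have hen : ∀ s x : ℝ, ‖Complex.exp (Complex.I * s * x)‖ = 1 := by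
    intro s x
    have := Complex.norm_exp_ofReal_mul_I (s * x)
    rwa [show ((s * x : ℝ) : ℂ) * Complex.I = Complex.I * s * x by push_cast; ring] at this
  have hder := hasDerivAt_integral_of_dominated_loc_of_deriv_le (μ := volume)
    (F := fun (s : ℝ) (x : ℝ) => Complex.exp (Complex.I * s * x) * (p x : ℂ))
    (F' := fun (s : ℝ) (x : ℝ) => Complex.exp (Complex.I * s * x) * (Complex.I * x) * (p x : ℂ))
    (x₀ := t) (s := Set.univ) (bound := fun x => ‖x * p x‖) Filter.univ_mem
    (.of_forall fun s => (hec s).aestronglyMeasurable.mul hpCm)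
    (hint.mono ((hec t).aestronglyMeasurable.mul hpCm)
      (.of_forall fun x => by simp [norm_mul, hen]))
    (((hec t).mul (by fun_prop : Continuous fun x : ℝ => Complex.I * (x : ℂ))).aestronglyMeasurable.mul hpCm)
    (.of_forall fun x s _ => by simp [norm_mul, hen])
    hxp.norm
    (.of_forall fun x s _ => by
      have h0 : HasDerivAt (fun s : ℝ => (s : ℂ)) 1 s := Complex.ofRealCLM.hasDerivAt
      have h2 : HasDerivAt (fun s : ℝ => Complex.I * (s : ℂ) * (x : ℂ)) (Complex.I * x) s := by
        simpa using (h0.const_mul Complex.I).mul_const (x : ℂ)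
      exact h2.cexp.mul_const _)
  obtain ⟨hFint, hder⟩ := hder
  have hfeq : f = fun s : ℝ => ∫ x : ℝ, Complex.exp (Complex.I * s * x) * (p x : ℂ) := funext hf
  rw [← hfeq] at hder
  have hdeq := hd.unique hder
  -- choose a phase
  set θ : ℝ := -Complex.arg d with hθ
  have hphase : Complex.exp (θ * Complex.I) * d = ‖d‖ := by
    conv_lhs => rw [← Complex.norm_mul_exp_arg_mul_I d]
    rw [mul_left_comm, ← Complex.exp_add]
    simp [hθ]
  have hnorm : ‖d‖ = ∫ x, -(x * p x * sin (t * x + θ)) := by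
    have h3 : ‖d‖ = (Complex.exp (θ * Complex.I) * d).re := by rw [hphase]; simp
    rw [h3, hdeq, ← integral_const_mul]
    have h4 := integral_re (hFint.const_mul (Complex.exp (θ * Complex.I)))
    simp only [RCLike.re_eq_complex_re] at h4
    rw [← h4]
    congr 1
    funext x
    have : Complex.exp (θ * Complex.I) *
        (Complex.exp (Complex.I * t * x) * (Complex.I * x) * (p x : ℂ)) =
        Complex.exp ((t * x + θ : ℝ) * Complex.I) * Complex.I * ((x * p x : ℝ) : ℂ) := by
      rw [show ((t * x + θ : ℝ) : ℂ) * Complex.I = θ * Complex.I + Complex.I * t * x by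
        push_cast; ring, Complex.exp_add]
      push_cast; ring
    rw [this, Complex.re_mul_ofReal, Complex.mul_I_re, Complex.exp_ofReal_mul_I_im]
    ring
  -- integration by parts
  have hgb : ∀ x, ‖cos (t * x + θ)‖ ≤ 1 := fun x => Real.abs_cos_le_one _
  have hcc : Continuous fun x : ℝ => cos (t * x + θ) := by fun_prop
  have hsc : Continuous fun x : ℝ => sin (t * x + θ) := by fun_prop
  have i1 : Integrable (fun x => (p x + x * p' x) * cos (t * x + θ)) :=
    (hint.add hxp').mul_bdd (c := 1) hcc.aestronglyMeasurable (.of_forall hgb)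
  have i2 : Integrable (fun x => x * p x * sin (t * x + θ)) :=
    hxp.mul_bdd (c := 1) hsc.aestronglyMeasurable (.of_forall fun x => Real.abs_sin_le_one _)
  have i2n : Integrable (fun x => -(x * p x * sin (t * x + θ))) := i2.neg
  have i3 : Integrable (fun x => x * p x * cos (t * x + θ)) :=
    hxp.mul_bdd (c := 1) hcc.aestronglyMeasurable (.of_forall hgb)
  have hz := aux_int_zero (fun x => x * p x * cos (t * x + θ))
    (fun x => (p x + x * p' x) * cos (t * x + θ) + t * -(x * p x * sin (t * x + θ)))
    i3 (i1.add (i2n.const_mul t)) (by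
      intro a b
      have h5 := aux_ftc p p' hii hFTC (fun x => x * cos (t * x + θ))
        (fun x => cos (t * x + θ) + x * (-sin (t * x + θ) * t)) (by fun_prop) (by
          intro x
          have h6 : HasDerivAt (fun x : ℝ => t * x + θ) t x := by
            simpa using ((hasDerivAt_id x).const_mul t).add_const θ
          simpa using (hasDerivAt_id x).fun_mul h6.cos) a b
      calc _ = p b * (b * cos (t * b + θ)) - p a * (a * cos (t * a + θ)) := by ring
        _ = _ := h5
        _ = _ := by congr 1; funext x; ring)
  rw [integral_add i1 (i2n.const_mul t), integral_const_mul, ← hnorm] at hz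
  rw [le_div_iff₀ (abs_pos.2 ht)]
  calc ‖d‖ * |t| = |t * ‖d‖| := by rw [abs_mul, abs_norm]; ring
    _ = ‖∫ x, (p x + x * p' x) * cos (t * x + θ)‖ := by
      rw [Real.norm_eq_abs, ← abs_neg]; congr 1; linarith
    _ ≤ ∫ x, (p x + |x * p' x|) := by
      refine norm_integral_le_of_norm_le (hint.add hxp'a) (.of_forall fun x => ?_)
      rw [norm_mul]
      refine (mul_le_of_le_one_right (norm_nonneg _) (hgb x)).trans ?_
      refine (norm_add_le _ _).trans ?_
      rw [Real.norm_of_nonneg (hnn x), Real.norm_eq_abs]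
    _ = 1 + ∫ x, |x * p' x| := by rw [integral_add hint hxp'a, h1]
    _ ≤ _ := by linarith
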